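/- For every positive real number n, Υ(n) = (1/n)·√(2/n)·R_C(0, 1/n) + R_C(0, n), where Υ(n) = 1/(2πn) + ∫_0^∞ sin(πnx)/(exp(2π√x) − 1) dx and R_C(0,n) = ∫_0^∞ cos(πnx)/(exp(2π√x) − 1) dx. -/

import Mathlib

open MeasureTheory Real Set

/-! Let `F(s) = ∫₀^∞ e^{-πsx} / (e^{2π√x} - 1) dx`. The function `1 / (e^{2πu} - 1)` is almost
self-reciprocal under the sine transform: the partial fractions of `coth` give
`∫₀^∞ sin(2πtu) / (e^{2πu} - 1) du = 1/4 + 1 / (2(e^{2πt} - 1)) - 1 / (4πt)`.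
Substituting `x = t²` in `F(s)`, inserting this formula and exchanging the integrals leaves Gaussian
integrals in `t`, so that
`F(s) = s^{-1/2} / (2π) - s^{-1} / (2π) + s^{-3/2} F(1/s)`
for `0 < re s`, and by continuity on the punctured imaginary axis. At `s = -in` the factor
`s^{-3/2}` is a real multiple of `i - 1`, so the difference of imaginary and real parts involves
only the real part of `F(i/n)`, a cosine integral.
-/

/-- The Bose–Einstein factor `1 / (e ^ (2πu) - 1)`, with the junk value `0` at `u = 0`. -/
noncomputable def boseFactor (u : ℝ) : ℝ := (exp (2 * π * u) - 1)⁻¹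

@[fun_prop]
lemma measurable_boseFactor : Measurable boseFactor := by
  unfold boseFactor
  fun_prop

lemma boseFactor_eq_exp_div_sinh (u : ℝ) :
    boseFactor u = exp (-(π * u)) / (2 * sinh (π * u)) := by
  have hexp : exp (2 * π * u) - 1 = exp (π * u) * (2 * sinh (π * u)) := by
    rw [sinh_eq, mul_div_cancel₀ _ two_ne_zero, mul_sub, ← exp_add, ← exp_add, add_neg_cancel,
      exp_zero]
    ring_nf
  rw [boseFactor, hexp, mul_inv, exp_neg, div_eq_mul_inv]

lemma cosh_div_sinh_pi_mul {u : ℝ} (hu : u ≠ 0) :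
    cosh (π * u) / sinh (π * u) = 1 + 2 * boseFactor u := by
  have hsinh : sinh (π * u) ≠ 0 := sinh_ne_zero.2 (mul_ne_zero pi_ne_zero hu)
  rw [boseFactor_eq_exp_div_sinh, ← cosh_sub_sinh]
  field_simp
  ring

lemma boseFactor_pos {u : ℝ} (hu : 0 < u) : 0 < boseFactor u :=
  inv_pos.2 <| sub_pos.2 <| one_lt_exp_iff.2 <| by positivity

lemma mul_boseFactor_le {u : ℝ} (hu : 0 < u) :
    u * boseFactor u ≤ (2 * π)⁻¹ * exp (-π * u) := by
  have hle : π * u ≤ sinh (π * u) := self_le_sinh_iff.2 (by positivity)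
  have : 0 < π * u := by positivity
  calc u * boseFactor u = u * (exp (-(π * u)) / (2 * sinh (π * u))) := by
        rw [boseFactor_eq_exp_div_sinh]
    _ ≤ u * (exp (-(π * u)) / (2 * (π * u))) := by gcongr
    _ = (2 * π)⁻¹ * exp (-π * u) := by rw [neg_mul]; field_simp

lemma integrableOn_mul_boseFactor : IntegrableOn (fun u ↦ u * boseFactor u) (Ioi 0) := by
  refine ((exp_neg_integrableOn_Ioi 0 pi_pos).const_mul (2 * π)⁻¹).mono' (by fun_prop) ?_
  filter_upwards [ae_restrict_mem measurableSet_Ioi] with u (hu : 0 < u)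
  rw [norm_of_nonneg (mul_nonneg hu.le (boseFactor_pos hu).le)]
  exact mul_boseFactor_le hu

lemma hasSum_exp_boseFactor {u : ℝ} (hu : 0 < u) :
    HasSum (fun k : ℕ ↦ exp (-(2 * π * (k + 1)) * u)) (boseFactor u) := by
  set q := exp (-(2 * π * u)) with hq
  have hq_lt : q < 1 := exp_lt_one_iff.2 (neg_lt_zero.2 (by positivity))
  have hsum : q * (1 - q)⁻¹ = boseFactor u := by
    rw [boseFactor, ← inv_inv (exp (2 * π * u)), ← exp_neg, ← hq]
    have : 1 - q ≠ 0 := (sub_pos.2 hq_lt).ne'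
    have : q ≠ 0 := (exp_pos _).ne'
    field_simp
  have hpow (k : ℕ) : exp (-(2 * π * (k + 1)) * u) = q * q ^ k := by
    rw [hq, ← exp_nat_mul, ← exp_add]
    ring_nf
  simpa only [hpow, ← hsum] using (hasSum_geometric_of_lt_one (exp_pos _).le hq_lt).mul_left q

lemma integral_sin_mul_exp_neg_mul (a : ℝ) {k : ℝ} (hk : 0 < k) :
    ∫ u in Ioi (0 : ℝ), sin (a * u) * exp (-k * u) = a / (a ^ 2 + k ^ 2) := by
  have hre : (-(k : ℂ) + a * Complex.I).re < 0 := by simp [hk]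
  have him (u : ℝ) : RCLike.im (Complex.exp ((-(k : ℂ) + a * Complex.I) * u)) =
      sin (a * u) * exp (-k * u) := by
    simp [Complex.exp_im, mul_comm]
  have hint := integral_im (integrableOn_exp_mul_complex_Ioi hre 0)
  simp_rw [him] at hint
  have hval : -Complex.exp ((-(k : ℂ) + a * Complex.I) * (0 : ℝ)) / (-(k : ℂ) + a * Complex.I) =
      -((-k : ℝ) + (a : ℝ) * Complex.I : ℂ)⁻¹ := by
    simp [neg_div]
  rw [hint, integral_exp_mul_complex_Ioi hre, hval, RCLike.im_eq_complex_im, Complex.neg_im,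
    Complex.inv_im, Complex.normSq_add_mul_I, Complex.add_im, Complex.ofReal_im,
    Complex.im_ofReal_mul, Complex.I_im]
  ring

lemma tsum_div_sq_add_sq {t : ℝ} (ht : t ≠ 0) :
    ∑' k : ℕ, t / (t ^ 2 + (k + 1) ^ 2) =
      π / 2 * (cosh (π * t) / sinh (π * t)) - 1 / (2 * t) := by
  have htI : (t * Complex.I : ℂ) ∈ Complex.integerComplement := by
    rw [Complex.mem_integerComplement_iff]
    rintro ⟨m, hm⟩
    exact ht (by simpa using (congrArg Complex.im hm).symm)
  have ht' : (t : ℂ) ≠ 0 := mod_cast ht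
  have hterm (k : ℕ) : 1 / (t * Complex.I - (k + 1)) + 1 / (t * Complex.I + (k + 1)) =
      -2 * Complex.I * ((t / (t ^ 2 + (k + 1) ^ 2) : ℝ) : ℂ) := by
    have hsub : (t * Complex.I - (k + 1) : ℂ) ≠ 0 := fun h ↦
      ht (by simpa using congrArg Complex.im h)
    have hadd : (t * Complex.I + (k + 1) : ℂ) ≠ 0 := fun h ↦
      ht (by simpa using congrArg Complex.im h)
    have hsq : (t ^ 2 + (k + 1) ^ 2 : ℂ) ≠ 0 := by
      exact_mod_cast (by positivity : (0 : ℝ) < t ^ 2 + (k + 1) ^ 2).ne'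
    push_cast
    field_simp
    linear_combination 2 * Complex.I * t ^ 3 * Complex.I_sq
  have hcot := cot_series_rep' htI
  simp_rw [hterm] at hcot
  rw [tsum_mul_left, ← Complex.ofReal_tsum, ← mul_assoc, Complex.cot_eq_cos_div_sin,
    Complex.cos_mul_I, Complex.sin_mul_I] at hcot
  have hsinh : Complex.sinh (π * t) ≠ 0 := by
    exact_mod_cast sinh_ne_zero.2 (mul_ne_zero pi_ne_zero ht)
  apply Complex.ofReal_injective
  apply mul_left_cancel₀ (by simp : -2 * Complex.I ≠ 0)
  rw [← hcot]
  push_cast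
  field_simp
  linear_combination
    (π * t * Complex.cosh (π * t) - Complex.sinh (π * t)) * Complex.I_sq

lemma integral_sin_mul_boseFactor {t : ℝ} (ht : t ≠ 0) :
    ∫ u in Ioi (0 : ℝ), sin (2 * π * t * u) * boseFactor u =
      1 / 4 + boseFactor t / 2 - 1 / (4 * π * t) := by
  have hbound (k : ℕ) : ∀ᵐ u ∂volume.restrict (Ioi (0 : ℝ)),
      ‖sin (2 * π * t * u) * exp (-(2 * π * (k + 1)) * u)‖ ≤
        |2 * π * t| * (u * exp (-(2 * π * (k + 1)) * u)) := by
    filter_upwards [ae_restrict_mem measurableSet_Ioi] with u (hu : 0 < u)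
    rw [norm_mul, norm_of_nonneg (exp_pos _).le, norm_eq_abs, ← mul_assoc]
    gcongr
    simpa only [abs_mul, abs_of_pos hu] using abs_sin_le_abs (x := 2 * π * t * u)
  have hbound_sum : ∀ᵐ u ∂volume.restrict (Ioi (0 : ℝ)),
      HasSum (fun k : ℕ ↦ |2 * π * t| * (u * exp (-(2 * π * (k + 1)) * u)))
        (|2 * π * t| * (u * boseFactor u)) := by
    filter_upwards [ae_restrict_mem measurableSet_Ioi] with u hu
    exact ((hasSum_exp_boseFactor hu).mul_left u).mul_left _
  have hseries := hasSum_integral_of_dominated_convergence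
    (fun (k : ℕ) u ↦ |2 * π * t| * (u * exp (-(2 * π * (k + 1)) * u)))
    (fun k ↦ by fun_prop) hbound (hbound_sum.mono fun u hu ↦ hu.summable)
    ((integrableOn_mul_boseFactor.const_mul _).congr
      (hbound_sum.mono fun u hu ↦ hu.tsum_eq.symm))
    ((ae_restrict_mem measurableSet_Ioi).mono fun u hu ↦
      (hasSum_exp_boseFactor hu).mul_left (sin (2 * π * t * u)))
  have hterm (k : ℕ) : ∫ u in Ioi (0 : ℝ), sin (2 * π * t * u) * exp (-(2 * π * (k + 1)) * u) =
      (2 * π)⁻¹ * (t / (t ^ 2 + (k + 1) ^ 2)) := by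
    rw [integral_sin_mul_exp_neg_mul _ (by positivity)]
    field_simp
  rw [← hseries.tsum_eq]
  simp_rw [hterm]
  rw [tsum_mul_left, tsum_div_sq_add_sq ht, cosh_div_sinh_pi_mul ht]
  field_simp
  ring

lemma integral_eq_two_smul_integral_Ioi_of_even {E : Type*} [NormedAddCommGroup E]
    [NormedSpace ℝ E] {f : ℝ → E} (hf : Integrable f) (heven : ∀ x, f (-x) = f x) :
    ∫ x, f x = (2 : ℝ) • ∫ x in Ioi (0 : ℝ), f x := by
  have hIic : ∫ x in Iic (0 : ℝ), f x = ∫ x in Ioi (0 : ℝ), f x := by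
    simpa only [heven, neg_zero] using (integral_comp_neg_Ioi 0 f).symm
  rw [← intervalIntegral.integral_Iic_add_Ioi (b := 0) hf.integrableOn hf.integrableOn, hIic,
    two_smul]

lemma integral_cos_mul_cexp_neg_mul_sq {b : ℂ} (hb : 0 < b.re) (a : ℂ) :
    ∫ x : ℝ, Complex.cos (a * x) * Complex.exp (-b * x ^ 2) =
      (π / b) ^ (1 / 2 : ℂ) * Complex.exp (-a ^ 2 / (4 * b)) := by
  have hint (c : ℂ) :
      Integrable fun x : ℝ ↦ Complex.exp (Complex.I * c * x) * Complex.exp (-b * x ^ 2) := by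
    simpa only [add_zero, add_comm (-b * _), Complex.exp_add] using
      integrable_cexp_quadratic hb (Complex.I * c) 0
  have hcos (x : ℝ) : Complex.cos (a * x) * Complex.exp (-b * x ^ 2) =
      (Complex.exp (Complex.I * a * x) * Complex.exp (-b * x ^ 2) +
        Complex.exp (Complex.I * (-a) * x) * Complex.exp (-b * x ^ 2)) / 2 := by
    rw [Complex.cos]
    ring_nf
  simp_rw [hcos]
  rw [integral_div, integral_add (hint a) (hint (-a)), fourierIntegral_gaussian hb,
    fourierIntegral_gaussian hb, neg_sq, add_self_div_two]

section SineGaussian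

variable (a : ℝ) {b : ℂ}

lemma integrable_sin_mul {g : ℝ → ℂ} (hg : Integrable g) :
    Integrable fun x : ℝ ↦ Complex.sin (a * x) * g x :=
  hg.bdd_mul (c := 1) (by fun_prop) <| .of_forall fun x ↦ by
    simpa only [← Complex.ofReal_mul, ← Complex.ofReal_sin, Complex.norm_real, norm_eq_abs] using
      abs_sin_le_one (a * x)

lemma integrable_cos_mul {g : ℝ → ℂ} (hg : Integrable g) :
    Integrable fun x : ℝ ↦ Complex.cos (a * x) * g x :=
  hg.bdd_mul (c := 1) (by fun_prop) <| .of_forall fun x ↦ by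
    simpa only [← Complex.ofReal_mul, ← Complex.ofReal_cos, Complex.norm_real, norm_eq_abs] using
      abs_cos_le_one (a * x)

lemma integral_sin_mul_mul_cexp_neg_mul_sq (hb : 0 < b.re) :
    ∫ x : ℝ, Complex.sin (a * x) * (x * Complex.exp (-b * x ^ 2)) =
      a / (2 * b) * ((π / b) ^ (1 / 2 : ℂ) * Complex.exp (-a ^ 2 / (4 * b))) := by
  have hb0 : b ≠ 0 := fun h ↦ hb.ne' (by simp [h])
  have hsin := integrable_sin_mul a (integrable_mul_cexp_neg_mul_sq hb)
  have hcos := integrable_cos_mul a (integrable_cexp_neg_mul_sq hb)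
  have hderiv (x : ℝ) : HasDerivAt (fun x : ℝ ↦ Complex.sin (a * x) * Complex.exp (-b * x ^ 2))
      (a * (Complex.cos (a * x) * Complex.exp (-b * x ^ 2)) -
        2 * b * (Complex.sin (a * x) * (x * Complex.exp (-b * x ^ 2)))) x := by
    have hexp := ((hasDerivAt_pow 2 (x : ℂ)).const_mul (-b)).cexp
    refine ((((hasDerivAt_id (x : ℂ)).const_mul (a : ℂ)).csin.mul hexp).comp_ofReal).congr_deriv ?_
    simp only [id_eq, Nat.cast_ofNat, Nat.add_one_sub_one, pow_one]
    ring
  have hzero := integral_eq_zero_of_hasDerivAt_of_integrable hderiv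
    ((hcos.const_mul _).sub (hsin.const_mul _))
    (integrable_sin_mul a (integrable_cexp_neg_mul_sq hb))
  rw [integral_sub (hcos.const_mul _) (hsin.const_mul _), integral_const_mul, integral_const_mul,
    integral_cos_mul_cexp_neg_mul_sq hb, sub_eq_zero] at hzero
  rw [div_mul_eq_mul_div, eq_div_iff (mul_ne_zero two_ne_zero hb0), hzero, mul_comm]

lemma integral_Ioi_sin_mul_mul_cexp_neg_mul_sq (hb : 0 < b.re) :
    ∫ x in Ioi (0 : ℝ), Complex.sin (a * x) * (x * Complex.exp (-b * x ^ 2)) =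
      a / (4 * b) * ((π / b) ^ (1 / 2 : ℂ) * Complex.exp (-a ^ 2 / (4 * b))) := by
  have hhalf := integral_eq_two_smul_integral_Ioi_of_even
    (integrable_sin_mul a (integrable_mul_cexp_neg_mul_sq hb)) fun x ↦ by simp
  rw [integral_sin_mul_mul_cexp_neg_mul_sq a hb, Complex.real_smul, Complex.ofReal_ofNat] at hhalf
  linear_combination -(1 / 2) * hhalf

end SineGaussian

/-- The Laplace transform `F(s) = ∫₀^∞ e^{-πsx} / (e^{2π√x} - 1) dx` for `0 ≤ re s`. On the
imaginary axis its real and imaginary parts are the cosine and sine integrals of the theorem. -/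
noncomputable def boseLaplace (s : ℂ) : ℂ :=
  ∫ x in Ioi (0 : ℝ), (boseFactor √x : ℂ) * Complex.exp (-(π * s) * x)

lemma integrableOn_boseFactor_sqrt : IntegrableOn (fun x ↦ boseFactor √x) (Ioi 0) := by
  rw [← integrableOn_Ioi_comp_rpow_iff _ two_ne_zero]
  refine IntegrableOn.congr_fun (integrableOn_mul_boseFactor.const_mul 2)
    (fun u (hu : 0 < u) ↦ ?_) measurableSet_Ioi
  norm_num [sqrt_sq hu.le, mul_assoc]

lemma boseLaplace_eq_integral_sq (s : ℂ) :
    boseLaplace s =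
      ∫ t in Ioi (0 : ℝ), 2 * ((t * boseFactor t : ℝ) * Complex.exp (-(π * s) * t ^ 2)) := by
  rw [boseLaplace, ← integral_comp_rpow_Ioi_of_pos two_pos]
  refine setIntegral_congr_fun measurableSet_Ioi fun t (ht : 0 < t) ↦ ?_
  norm_num [sqrt_sq ht.le, mul_assoc]

lemma norm_boseFactor_mul_cexp_le {s : ℂ} (hs : 0 ≤ s.re) {x : ℝ} (hx : 0 < x) :
    ‖(boseFactor √x : ℂ) * Complex.exp (-(π * s) * x)‖ ≤ boseFactor √x := by
  have hpos := (boseFactor_pos (sqrt_pos.2 hx)).le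
  rw [norm_mul, Complex.norm_real, norm_of_nonneg hpos, Complex.norm_exp]
  refine mul_le_of_le_one_right hpos (exp_le_one_iff.2 ?_)
  rw [Complex.re_mul_ofReal, Complex.neg_re, Complex.re_ofReal_mul, neg_mul, neg_nonpos]
  positivity

lemma integrableOn_boseFactor_mul_cexp {s : ℂ} (hs : 0 ≤ s.re) :
    IntegrableOn (fun x : ℝ ↦ (boseFactor √x : ℂ) * Complex.exp (-(π * s) * x)) (Ioi 0) :=
  integrableOn_boseFactor_sqrt.mono' (by fun_prop) <|
    (ae_restrict_mem measurableSet_Ioi).mono fun _ hx ↦ norm_boseFactor_mul_cexp_le hs hx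

lemma continuousOn_boseLaplace : ContinuousOn boseLaplace {s | 0 ≤ s.re} :=
  continuousOn_of_dominated (fun s hs ↦ (integrableOn_boseFactor_mul_cexp hs).aestronglyMeasurable)
    (fun _ hs ↦ (ae_restrict_mem measurableSet_Ioi).mono fun _ hx ↦
      norm_boseFactor_mul_cexp_le hs hx)
    integrableOn_boseFactor_sqrt (.of_forall fun x ↦ by fun_prop)

lemma re_boseLaplace_mul_I (c : ℝ) :
    (boseLaplace (c * Complex.I)).re =
      ∫ x in Ioi (0 : ℝ), cos (π * c * x) / (exp (2 * π * √x) - 1) := by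
  have hint := integrableOn_boseFactor_mul_cexp (s := c * Complex.I) (by simp)
  refine (integral_re hint).symm.trans (integral_congr_ae (.of_forall fun x ↦ ?_))
  simp only [RCLike.re_eq_complex_re, Complex.re_ofReal_mul, Complex.exp_re, boseFactor,
    div_eq_inv_mul]
  simp [← mul_assoc]

lemma im_boseLaplace_mul_I (c : ℝ) :
    (boseLaplace (c * Complex.I)).im =
      -∫ x in Ioi (0 : ℝ), sin (π * c * x) / (exp (2 * π * √x) - 1) := by
  have hint := integrableOn_boseFactor_mul_cexp (s := c * Complex.I) (by simp)
  rw [← integral_neg]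
  refine (integral_im hint).symm.trans (integral_congr_ae (.of_forall fun x ↦ ?_))
  simp only [RCLike.im_eq_complex_im, Complex.im_ofReal_mul, Complex.exp_im, boseFactor,
    div_eq_inv_mul]
  simp [← mul_assoc]


/-- The integrand of the double integral produced by inserting `integral_sin_mul_boseFactor` into
`boseLaplace s`, with `t` the variable of the Laplace transform. -/
noncomputable def sineKernel (s : ℂ) (t u : ℝ) : ℂ :=
  (sin (2 * π * t * u) * boseFactor u : ℝ) * (t * Complex.exp (-(π * s) * t ^ 2))

lemma norm_sineKernel_le (s : ℂ) {t u : ℝ} (ht : 0 < t) (hu : 0 < u) :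
    ‖sineKernel s t u‖ ≤
      2 * π * ((t ^ 2 * exp (-(π * s.re) * t ^ 2)) * (u * boseFactor u)) := by
  have hbose := boseFactor_pos hu
  have hsin : |sin (2 * π * t * u)| ≤ 2 * π * t * u :=
    abs_sin_le_abs.trans_eq (abs_of_pos (by positivity))
  rw [sineKernel, norm_mul, norm_mul, norm_cexp_neg_mul_sq, Complex.norm_real, Complex.norm_real,
    norm_mul, norm_of_nonneg hbose.le, norm_of_nonneg ht.le, norm_eq_abs, Complex.re_ofReal_mul]
  calc |sin (2 * π * t * u)| * boseFactor u * (t * exp (-(π * s.re) * t ^ 2))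
      ≤ 2 * π * t * u * boseFactor u * (t * exp (-(π * s.re) * t ^ 2)) := by gcongr
    _ = 2 * π * ((t ^ 2 * exp (-(π * s.re) * t ^ 2)) * (u * boseFactor u)) := by ring

lemma integrable_sineKernel {s : ℂ} (hs : 0 < s.re) :
    Integrable (Function.uncurry (sineKernel s))
      ((volume.restrict (Ioi 0)).prod (volume.restrict (Ioi 0))) := by
  have hgauss : IntegrableOn (fun t : ℝ ↦ t ^ 2 * exp (-(π * s.re) * t ^ 2)) (Ioi 0) := by
    simpa only [rpow_two] using
      integrableOn_rpow_mul_exp_neg_mul_sq (s := 2) (mul_pos pi_pos hs) (by norm_num)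
  refine ((hgauss.mul_prod integrableOn_mul_boseFactor).const_mul (2 * π)).mono'
    (by unfold sineKernel; fun_prop) ?_
  rw [Measure.prod_restrict]
  filter_upwards [ae_restrict_mem (measurableSet_Ioi.prod measurableSet_Ioi)] with ⟨t, u⟩ htu
  exact norm_sineKernel_le s htu.1 htu.2

lemma integral_sineKernel_left {s : ℂ} (hs : 0 < s.re) (u : ℝ) :
    ∫ t in Ioi (0 : ℝ), sineKernel s t u =
      s⁻¹ * s⁻¹ ^ (1 / 2 : ℂ) / 4 *
        (2 * ((u * boseFactor u : ℝ) * Complex.exp (-(π * s⁻¹) * u ^ 2))) := by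
  have hs0 : s ≠ 0 := fun h ↦ hs.ne' (by simp [h])
  have hπ : (π : ℂ) ≠ 0 := mod_cast pi_ne_zero
  have hb : 0 < ((π : ℂ) * s).re := by
    simpa only [Complex.re_ofReal_mul] using mul_pos pi_pos hs
  have hkernel (t : ℝ) : sineKernel s t u = boseFactor u *
      (Complex.sin ((2 * π * u : ℝ) * t) * (t * Complex.exp (-(π * s) * t ^ 2))) := by
    rw [sineKernel]
    push_cast
    ring_nf
  have hbase : (π : ℂ) / (π * s) = s⁻¹ := by field_simp
  have hexponent : -((2 * π * u : ℝ) : ℂ) ^ 2 / (4 * (π * s)) = -(π * s⁻¹) * u ^ 2 := by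
    push_cast
    field_simp
    ring
  simp_rw [hkernel]
  rw [integral_const_mul, integral_Ioi_sin_mul_mul_cexp_neg_mul_sq _ hb, hbase, hexponent]
  push_cast
  field_simp

lemma integral_integral_sineKernel {s : ℂ} (hs : 0 < s.re) :
    ∫ t in Ioi (0 : ℝ), ∫ u in Ioi (0 : ℝ), sineKernel s t u =
      s⁻¹ * s⁻¹ ^ (1 / 2 : ℂ) / 4 * boseLaplace s⁻¹ := by
  rw [integral_integral_swap (integrable_sineKernel hs), boseLaplace_eq_integral_sq]
  simp_rw [integral_sineKernel_left hs]
  exact integral_const_mul _ _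

lemma two_mul_mul_boseFactor_eq_integral_sineKernel (s : ℂ) {t : ℝ} (ht : t ≠ 0) :
    2 * ((t * boseFactor t : ℝ) * Complex.exp (-(π * s) * t ^ 2)) =
      (π : ℂ)⁻¹ * Complex.exp (-(π * s) * t ^ 2) - t * Complex.exp (-(π * s) * t ^ 2) +
        4 * ∫ u in Ioi (0 : ℝ), sineKernel s t u := by
  have hπ : (π : ℂ) ≠ 0 := mod_cast pi_ne_zero
  have ht' : (t : ℂ) ≠ 0 := mod_cast ht
  simp only [sineKernel]
  rw [integral_mul_const, integral_complex_ofReal, integral_sin_mul_boseFactor ht]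
  push_cast
  field_simp
  ring

theorem boseLaplace_functional_equation_of_re_pos {s : ℂ} (hs : 0 < s.re) :
    boseLaplace s =
      s⁻¹ ^ (1 / 2 : ℂ) / (2 * π) - s⁻¹ / (2 * π) + s⁻¹ * s⁻¹ ^ (1 / 2 : ℂ) * boseLaplace s⁻¹ := by
  have hs0 : s ≠ 0 := fun h ↦ hs.ne' (by simp [h])
  have hπ : (π : ℂ) ≠ 0 := mod_cast pi_ne_zero
  have hb : 0 < ((π : ℂ) * s).re := by
    simpa only [Complex.re_ofReal_mul] using mul_pos pi_pos hs
  have hgauss := ((integrable_cexp_neg_mul_sq hb).integrableOn (s := Ioi 0)).const_mul (π : ℂ)⁻¹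
  have hmoment := (integrable_mul_cexp_neg_mul_sq hb).integrableOn (s := Ioi 0)
  have hkernel : IntegrableOn (fun t ↦ 4 * ∫ u in Ioi (0 : ℝ), sineKernel s t u) (Ioi 0) :=
    (integrable_sineKernel hs).integral_prod_left.const_mul 4
  have hbase : (π : ℂ) / (π * s) = s⁻¹ := by field_simp
  calc boseLaplace s
      = ∫ t in Ioi (0 : ℝ), ((π : ℂ)⁻¹ * Complex.exp (-(π * s) * t ^ 2) -
          t * Complex.exp (-(π * s) * t ^ 2) + 4 * ∫ u in Ioi (0 : ℝ), sineKernel s t u) := by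
        rw [boseLaplace_eq_integral_sq]
        exact setIntegral_congr_fun measurableSet_Ioi fun t (ht : 0 < t) ↦
          two_mul_mul_boseFactor_eq_integral_sineKernel s ht.ne'
    _ = (π : ℂ)⁻¹ * (s⁻¹ ^ (1 / 2 : ℂ) / 2) - (2 * (π * s))⁻¹ +
          4 * (s⁻¹ * s⁻¹ ^ (1 / 2 : ℂ) / 4 * boseLaplace s⁻¹) := by
        rw [integral_add (by exact hgauss.sub hmoment) hkernel, integral_sub hgauss hmoment,
          integral_const_mul, integral_const_mul, integral_gaussian_complex_Ioi hb,
          integral_mul_cexp_neg_mul_sq hb, hbase, integral_integral_sineKernel hs]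
    _ = _ := by
        rw [mul_inv, mul_inv]
        ring

theorem boseLaplace_functional_equation {s : ℂ} (hs : 0 ≤ s.re) (hs0 : s ≠ 0) :
    boseLaplace s =
      s⁻¹ ^ (1 / 2 : ℂ) / (2 * π) - s⁻¹ / (2 * π) + s⁻¹ * s⁻¹ ^ (1 / 2 : ℂ) * boseLaplace s⁻¹ := by
  set H : Set ℂ := {s | 0 ≤ s.re} ∩ {0}ᶜ
  have hH_slit : H ⊆ Complex.slitPlane := fun z hz ↦ by
    rw [Complex.mem_slitPlane_iff]
    by_contra! hz'
    exact hz.2 (Complex.ext (hz'.1.antisymm hz.1) hz'.2)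
  have hH_inv : MapsTo (fun z : ℂ ↦ z⁻¹) H H := fun z hz ↦ by
    refine ⟨?_, inv_ne_zero hz.2⟩
    rw [mem_ofPred_eq, Complex.inv_re]
    exact div_nonneg hz.1 (Complex.normSq_nonneg z)
  have hinv : ContinuousOn (fun z : ℂ ↦ z⁻¹) H := continuousOn_inv₀.mono inter_subset_right
  have hsqrt : ContinuousOn (fun z : ℂ ↦ z⁻¹ ^ (1 / 2 : ℂ)) H :=
    hinv.cpow_const fun z hz ↦ hH_slit (hH_inv hz)
  have hlaplace_inv : ContinuousOn (fun z : ℂ ↦ boseLaplace z⁻¹) H :=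
    continuousOn_boseLaplace.comp hinv (hH_inv.mono_right inter_subset_left)
  have hsub : {z : ℂ | 0 < z.re} ⊆ H := fun z (hz : 0 < z.re) ↦
    ⟨hz.le, fun h ↦ hz.ne' (by simp [mem_singleton_iff.1 h])⟩
  have hdense : H ⊆ closure {z : ℂ | 0 < z.re} := by
    rw [Complex.closure_setOfPred_lt_re]
    exact inter_subset_left
  exact EqOn.of_subset_closure (fun z hz ↦ boseLaplace_functional_equation_of_re_pos hz)
    (continuousOn_boseLaplace.mono inter_subset_left)
    (((hsqrt.div_const _).sub (hinv.div_const _)).add ((hinv.mul hsqrt).mul hlaplace_inv))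
    hsub hdense ⟨hs, hs0⟩

lemma ofReal_mul_I_cpow_half {m : ℝ} (hm : 0 ≤ m) :
    (m * Complex.I) ^ (1 / 2 : ℂ) = (√(2 * m) / 2 : ℝ) * (1 + Complex.I) := by
  have hsqrt : √(m / 2) = √(2 * m) / 2 := by
    rw [show m / 2 = 2 * m / 2 ^ 2 by ring, sqrt_div' _ (sq_nonneg 2), sqrt_sq zero_le_two]
  rw [one_div]
  apply Complex.ext
  · rw [Complex.cpow_inv_two_re]
    simp [abs_of_nonneg hm, hsqrt]
  · rw [Complex.cpow_inv_two_im_eq_sqrt (by simpa using hm)]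
    simp [abs_of_nonneg hm, hsqrt]

theorem boseLaplace_neg_mul_I {n : ℝ} (hn : 0 < n) :
    boseLaplace ((-n : ℝ) * Complex.I) =
      (√(2 / n) / (4 * π) : ℝ) * (1 + Complex.I) - (1 / (2 * π * n) : ℝ) * Complex.I +
        (1 / n * √(2 / n) / 2 : ℝ) * (Complex.I - 1) *
          boseLaplace ((1 / n : ℝ) * Complex.I) := by
  have hinv : (((-n : ℝ) : ℂ) * Complex.I)⁻¹ = (1 / n : ℝ) * Complex.I := by simp [mul_comm]
  rw [boseLaplace_functional_equation (by simp) (by simp [hn.ne']), hinv,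
    ofReal_mul_I_cpow_half (one_div_nonneg.2 hn.le), mul_one_div]
  push_cast
  linear_combination (1 / n * (√(2 / n) / 2) * boseLaplace (1 / n * Complex.I) : ℂ) * Complex.I_sq

/-- Ramanujan's reciprocity: `Υ(n) = (1/n)√(2/n) R_C(0,1/n) + R_C(0,n)`, where
`Υ(n) = 1/(2πn) + ∫_0^∞ sin(πnx)/(e^{2π√x} − 1) dx` and
`R_C(0,n) = ∫_0^∞ cos(πnx)/(e^{2π√x} − 1) dx`. -/
theorem ramanujan_sine_reciprocity (n : ℝ) (hn : 0 < n) :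
    (1 / (2 * π * n) +
        ∫ x in Ioi (0:ℝ), Real.sin (π * n * x) / (Real.exp (2 * π * Real.sqrt x) - 1)) =
      (1 / n) * Real.sqrt (2 / n) *
        (∫ x in Ioi (0:ℝ), Real.cos (π * (1 / n) * x) / (Real.exp (2 * π * Real.sqrt x) - 1))
      + (∫ x in Ioi (0:ℝ), Real.cos (π * n * x) / (Real.exp (2 * π * Real.sqrt x) - 1)) := by
  have hre := congrArg Complex.re (boseLaplace_neg_mul_I hn)
  have him := congrArg Complex.im (boseLaplace_neg_mul_I hn)
  simp only [Complex.add_re, Complex.sub_re, Complex.mul_re, Complex.add_im, Complex.sub_im,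
    Complex.mul_im, Complex.ofReal_re, Complex.ofReal_im, Complex.one_re, Complex.one_im,
    Complex.I_re, Complex.I_im, re_boseLaplace_mul_I, im_boseLaplace_mul_I, mul_neg, neg_mul,
    cos_neg, sin_neg, neg_div, integral_neg, neg_neg] at hre him
  linear_combination him - hre
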